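/- For every triple α = (α₁,α₂,α₃) ∈ (0,π)³, exactly one of the following five conditions holds: (1) α₁+α₂+α₃ > π and αⱼ + αₖ < αᵢ + π for all i (α is spherical); (2) α₁+α₂+α₃ < π (α is hyperbolic); (3) α₁+α₂+α₃ = π (α is Euclidean); (4) there exists i with αⱼ + αₖ > αᵢ + π (α is flipped hyperbolic); (5) there exists i with αⱼ + αₖ = αᵢ + π (α is flipped Euclidean). Moreover in cases (4) and (5) the index i is unique. -/

import Mathlib

open Real

/-!
If the triangle inequality fails at two vertices `i ≠ j`, adding the two failures shows that the
third angle is at least `π`. So it fails at most at one vertex, and there it fails either strictly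
(flipped hyperbolic) or with equality (flipped Euclidean). Since the angles are positive, a failure
forces the angle sum above `π`. If no inequality fails, comparing the angle sum with `π`
separates the spherical, Euclidean and hyperbolic cases.
-/

namespace MoebiusTriangle

/-- The sum of the three angles of a triple. -/
def angleSum {R : Type*} [AddCommMonoid R] (α : Fin 3 → R) : R :=
  α 0 + α 1 + α 2

lemma exists_angleSum_eq_add_add {R : Type*} [AddCommMonoid R] (α : Fin 3 → R) {i j : Fin 3}
    (hij : i ≠ j) : ∃ k, angleSum α = α i + α j + α k := by
  -- The three vertices add up to `0` in `Fin 3`, where `-1 = 2`.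
  refine ⟨2 * (i + j), ?_⟩
  fin_cases i <;> fin_cases j <;> first
    | exact absurd rfl hij
    | rfl
    | simp only [angleSum, Fin.reduceFinMk, Fin.reduceAdd, Fin.reduceMul]; abel

variable {R : Type*} [CommRing R] [LinearOrder R]

/-- The triangle inequality `αⱼ + αₖ < αᵢ + p` at the vertex `i`, with `αᵢ` added to both sides so
that only the angle sum enters. Here and below `p` is the measure of a straight angle, which is `π`
for angles in radians. -/
def TriangleIneqAt (p : R) (α : Fin 3 → R) (i : Fin 3) : Prop :=
  angleSum α < 2 * α i + p

/-- Spherical triples: the angles of nondegenerate spherical triangles. -/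
def IsSpherical (p : R) (α : Fin 3 → R) : Prop :=
  p < angleSum α ∧ ∀ i, TriangleIneqAt p α i

/-- Hyperbolic triples: the angle sum is less than a straight angle. -/
def IsHyperbolic (p : R) (α : Fin 3 → R) : Prop :=
  angleSum α < p

/-- Euclidean triples: the angle sum is a straight angle. -/
def IsEuclidean (p : R) (α : Fin 3 → R) : Prop :=
  angleSum α = p

/-- Triples flipped hyperbolic at `i`: `αⱼ + αₖ > αᵢ + p`, in the form used for
`TriangleIneqAt`. -/
def IsFlippedHyperbolicAt (p : R) (α : Fin 3 → R) (i : Fin 3) : Prop :=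
  2 * α i + p < angleSum α

/-- Triples flipped Euclidean at `i`: `αⱼ + αₖ = αᵢ + p`, in the form used for
`TriangleIneqAt`. -/
def IsFlippedEuclideanAt (p : R) (α : Fin 3 → R) (i : Fin 3) : Prop :=
  angleSum α = 2 * α i + p

variable {p : R} {α : Fin 3 → R} {i j : Fin 3}

lemma IsFlippedHyperbolicAt.not_triangleIneqAt (h : IsFlippedHyperbolicAt p α i) :
    ¬TriangleIneqAt p α i :=
  lt_asymm h

lemma IsFlippedEuclideanAt.not_triangleIneqAt (h : IsFlippedEuclideanAt p α i) :
    ¬TriangleIneqAt p α i :=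
  h.not_lt

lemma isFlippedEuclideanAt_iff_not_isFlippedHyperbolicAt (h : ¬TriangleIneqAt p α i) :
    IsFlippedEuclideanAt p α i ↔ ¬IsFlippedHyperbolicAt p α i :=
  ⟨fun heq => heq.not_gt, fun hle => le_antisymm (not_lt.mp hle) (not_lt.mp h)⟩

variable [IsStrictOrderedRing R]

lemma lt_angleSum_of_not_triangleIneqAt (hi : 0 < α i) (h : ¬TriangleIneqAt p α i) :
    p < angleSum α :=
  calc
    p < 2 * α i + p := lt_add_of_pos_left p (mul_pos two_pos hi)
    _ ≤ angleSum α := not_lt.mp h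

lemma eq_of_not_triangleIneqAt (hα : ∀ k, α k < p) (hi : ¬TriangleIneqAt p α i)
    (hj : ¬TriangleIneqAt p α j) : i = j := by
  by_contra hij
  obtain ⟨k, hk⟩ := exists_angleSum_eq_add_add α hij
  have third_angle_ge : p ≤ α k := by linarith [not_lt.mp hi, not_lt.mp hj]
  exact (hα k).not_ge third_angle_ge

end MoebiusTriangle

open MoebiusTriangle in
theorem moebius_triangle_classification_general {R : Type*} [CommRing R] [LinearOrder R]
    [IsStrictOrderedRing R] {p : R} {α : Fin 3 → R} (hα : ∀ i, α i ∈ Set.Ioo 0 p) :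
    (let P₁ := IsSpherical p α
     let P₂ := IsHyperbolic p α
     let P₃ := IsEuclidean p α
     let P₄ := ∃ i, IsFlippedHyperbolicAt p α i
     let P₅ := ∃ i, IsFlippedEuclideanAt p α i
     ((P₁ ∧ ¬P₂ ∧ ¬P₃ ∧ ¬P₄ ∧ ¬P₅) ∨
      (¬P₁ ∧ P₂ ∧ ¬P₃ ∧ ¬P₄ ∧ ¬P₅) ∨
      (¬P₁ ∧ ¬P₂ ∧ P₃ ∧ ¬P₄ ∧ ¬P₅) ∨
      (¬P₁ ∧ ¬P₂ ∧ ¬P₃ ∧ P₄ ∧ ¬P₅) ∨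
      (¬P₁ ∧ ¬P₂ ∧ ¬P₃ ∧ ¬P₄ ∧ P₅)) ∧
     (∀ i j, IsFlippedHyperbolicAt p α i → IsFlippedHyperbolicAt p α j → i = j) ∧
     (∀ i j, IsFlippedEuclideanAt p α i → IsFlippedEuclideanAt p α j → i = j)) := by
  intro P₁ P₂ P₃ P₄ P₅
  have unique {i j} (hi : ¬TriangleIneqAt p α i) (hj : ¬TriangleIneqAt p α j) : i = j :=
    eq_of_not_triangleIneqAt (fun k => (hα k).2) hi hj
  refine ⟨?_, fun i j hi hj => unique hi.not_triangleIneqAt hj.not_triangleIneqAt,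
    fun i j hi hj => unique hi.not_triangleIneqAt hj.not_triangleIneqAt⟩
  by_cases htri : ∀ i, TriangleIneqAt p α i
  · have not_flippedHyperbolic : ¬P₄ := fun ⟨i, hi⟩ => hi.not_triangleIneqAt (htri i)
    have not_flippedEuclidean : ¬P₅ := fun ⟨i, hi⟩ => hi.not_triangleIneqAt (htri i)
    have spherical_iff : P₁ ↔ p < angleSum α := and_iff_left htri
    rcases lt_trichotomy (angleSum α) p with hlt | heq | hgt
    · simp [P₂, P₃, IsHyperbolic, IsEuclidean, hlt.ne, hlt.not_gt, *]
    · simp [P₂, P₃, IsHyperbolic, IsEuclidean, *]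
    · simp [P₂, P₃, IsHyperbolic, IsEuclidean, hgt.ne', hgt.not_gt, *]
  · obtain ⟨i, hi⟩ := not_forall.mp htri
    have hgt : p < angleSum α := lt_angleSum_of_not_triangleIneqAt (hα i).1 hi
    have not_spherical : ¬P₁ := fun h => hi (h.2 i)
    have not_hyperbolic : ¬P₂ := hgt.not_gt
    have not_euclidean : ¬P₃ := hgt.ne'
    have flippedHyperbolic_iff : P₄ ↔ IsFlippedHyperbolicAt p α i :=
      ⟨fun ⟨_, h⟩ => unique h.not_triangleIneqAt hi ▸ h, fun h => ⟨i, h⟩⟩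
    have flippedEuclidean_iff : P₅ ↔ IsFlippedEuclideanAt p α i :=
      ⟨fun ⟨_, h⟩ => unique h.not_triangleIneqAt hi ▸ h, fun h => ⟨i, h⟩⟩
    rw [isFlippedEuclideanAt_iff_not_isFlippedHyperbolicAt hi] at flippedEuclidean_iff
    by_cases h : IsFlippedHyperbolicAt p α i <;> simp [*]

/-- For every α = (α₁,α₂,α₃) ∈ (0,π)³, exactly one of the following five
conditions holds: (1) spherical: α₁+α₂+α₃ > π and each triangle inequality
αⱼ+αₖ < αᵢ+π holds; (2) hyperbolic: α₁+α₂+α₃ < π; (3) Euclidean: α₁+α₂+α₃ = π;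
(4) flipped hyperbolic: αⱼ+αₖ > αᵢ+π for some i; (5) flipped Euclidean:
αⱼ+αₖ = αᵢ+π for some i. Moreover in cases (4) and (5) the index i is unique.
Here α : Fin 3 → ℝ and, with S = α 0 + α 1 + α 2, the condition αⱼ+αₖ < αᵢ+π
(for {i,j,k}={1,2,3}) is written S < 2·αᵢ + π, etc. -/
theorem moebius_triangle_classification (α : Fin 3 → ℝ)
    (hα : ∀ i, α i ∈ Set.Ioo 0 π) :
    (let S := α 0 + α 1 + α 2
     let P₁ : Prop := S > π ∧ ∀ i, S < 2 * α i + π       -- spherical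
     let P₂ : Prop := S < π                               -- hyperbolic
     let P₃ : Prop := S = π                               -- Euclidean
     let P₄ : Prop := ∃ i, S > 2 * α i + π                -- flipped hyperbolic
     let P₅ : Prop := ∃ i, S = 2 * α i + π                -- flipped Euclidean
     ((P₁ ∧ ¬P₂ ∧ ¬P₃ ∧ ¬P₄ ∧ ¬P₅) ∨
      (¬P₁ ∧ P₂ ∧ ¬P₃ ∧ ¬P₄ ∧ ¬P₅) ∨
      (¬P₁ ∧ ¬P₂ ∧ P₃ ∧ ¬P₄ ∧ ¬P₅) ∨
      (¬P₁ ∧ ¬P₂ ∧ ¬P₃ ∧ P₄ ∧ ¬P₅) ∨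
      (¬P₁ ∧ ¬P₂ ∧ ¬P₃ ∧ ¬P₄ ∧ P₅)) ∧
     (∀ i j, S > 2 * α i + π → S > 2 * α j + π → i = j) ∧
     (∀ i j, S = 2 * α i + π → S = 2 * α j + π → i = j)) :=
  moebius_triangle_classification_general hα
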